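/- arXiv:2105.12503 — 3 statements merged into one kernel-verified Lean document; each statement's English description precedes it below -/
import Mathlib

section
/- Let H and F be graphs with chromatic numbers r+1 and s+1 respectively, where r ≥ 1. If s ≥ r, or F is not a complete multipartite graph, then the induced Turán number ex(n, {H, F-ind}) equals (1 - 1/r + o(1))·C(n,2) as n → ∞; that is, ex(n, {H, F-ind}) / C(n,2) → 1 - 1/r as n → ∞. -/
open SimpleGraph Filter

/-- `G` contains a (not necessarily induced) copy of `H`: an injective graph homomorphism. -/
def ContainsCopy {α β : Type*} (H : SimpleGraph α) (G : SimpleGraph β) : Prop :=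
  ∃ f : H →g G, Function.Injective f

/-- `G` contains an induced copy of `F`: a graph embedding. -/
def ContainsInducedCopy {α β : Type*} (F : SimpleGraph α) (G : SimpleGraph β) : Prop :=
  Nonempty (F ↪g G)

/-- The induced Turán number `ex(n, {H, F-ind})`: the maximum number of edges in an
`n`-vertex graph with no copy of `H` and no induced copy of `F`. -/
noncomputable def inducedTuranNumber {α β : Type*} (H : SimpleGraph α) (F : SimpleGraph β)
    (n : ℕ) : ℕ :=
  sSup {m | ∃ G : SimpleGraph (Fin n),
    ¬ ContainsCopy H G ∧ ¬ ContainsInducedCopy F G ∧ m = G.edgeSet.ncard}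

/-- A graph is complete multipartite if its vertices can be assigned to parts so that
two vertices are adjacent iff they lie in different parts. -/
def IsCompleteMultipartite {α : Type*} (G : SimpleGraph α) : Prop :=
  ∃ (ι : Type) (f : α → ι), ∀ a b, G.Adj a b ↔ f a ≠ f b

/-- A graph is complete `k`-partite if its vertices can be partitioned into `k` (nonempty)
parts so that two vertices are adjacent iff they lie in different parts. -/
def IsCompleteMultipartiteWith {α : Type*} (G : SimpleGraph α) (k : ℕ) : Prop :=
  ∃ f : α → Fin k, Function.Surjective f ∧ ∀ a b, G.Adj a b ↔ f a ≠ f b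

/-- Turán graphs have at least a `1 - 1/r` proportion of all the edges. -/
theorem turan_card_lower (r : ℕ) (hr : 1 ≤ r) (n : ℕ) :
    (r - 1) * n.choose 2 ≤ r * (turanGraph n r).edgeFinset.card := by
  obtain ⟨k, rfl⟩ : ∃ k, r = k + 1 := ⟨r - 1, by omega⟩
  induction n using Nat.strong_induction_on with
  | _ n ih =>
    rcases Nat.lt_or_ge n (k + 1) with h | h
    · have ht : turanGraph n (k + 1) = ⊤ := turanGraph_eq_top.2 (Or.inr h.le)
      have hc : (turanGraph n (k + 1)).edgeFinset.card = n.choose 2 := by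
        have := SimpleGraph.card_edgeFinset_top_eq_card_choose_two (V := Fin n)
        rw [Fintype.card_fin] at this
        rw [← this]
        congr 1
        ext e
        simp only [SimpleGraph.mem_edgeFinset, ht]
      rw [hc]
      exact Nat.mul_le_mul_right _ (by omega)
    · obtain ⟨m, rfl⟩ : ∃ m, n = m + (k + 1) := ⟨n - (k + 1), by omega⟩
      rw [card_edgeFinset_turanGraph_add]
      have h1 := ih m (by omega)
      simp only [Nat.add_sub_cancel] at h1 ⊢
      have h2 : ((m + (k + 1)).choose 2) = m.choose 2 + m * (k + 1) + (k + 1).choose 2 := by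
        have : (((m + (k + 1)).choose 2 : ℕ) : ℚ)
            = ((m.choose 2 + m * (k + 1) + (k + 1).choose 2 : ℕ) : ℚ) := by
          push_cast
          rw [Nat.cast_choose_two, Nat.cast_choose_two, Nat.cast_choose_two]
          push_cast
          ring
        exact_mod_cast this
      rw [h2]
      have h3 : 0 ≤ (k + 1).choose 2 := Nat.zero_le _
      nlinarith

/-- Recursion from the minimum degree version of Erdős–Stone. -/
theorem extremal_step {α : Type*} [Fintype α] (H : SimpleGraph α) (r : ℕ) (hr : 1 ≤ r)
    (hcol : H.Colorable (r + 1)) {ε : ℝ} (hε : 0 < ε) :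
    ∀ᶠ n : ℕ in atTop, (extremalNumber n H : ℝ) ≤
      extremalNumber (n - 1) H + (1 - 1 / (r : ℝ) + ε) * n := by
  classical
  obtain ⟨C⟩ := hcol
  have hcont : H ⊑ completeEquipartiteGraph (r + 1) (Fintype.card α) :=
    isContained_completeEquipartiteGraph_of_colorable C _
      (fun c => Fintype.card_subtype_le _)
  have hc : 0 ≤ 1 - 1 / (r : ℝ) := by
    have : (1 : ℝ) ≤ r := by exact_mod_cast hr
    rw [sub_nonneg, div_le_one (by linarith)]
    exact this
  filter_upwards [eventually_completeEquipartiteGraph_isContained_of_minDegree hε r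
    (Fintype.card α), eventually_ge_atTop 1] with n hn hn1
  have key := (extremalNumber_le_iff_of_nonneg (V := Fin n) H
    (m := (extremalNumber (n - 1) H : ℝ) + (1 - 1 / (r : ℝ) + ε) * n) (by positivity)).2
  rw [Fintype.card_fin] at key
  apply key
  intro G _ hfree
  have hmin : (G.minDegree : ℝ) < (1 - 1 / (r : ℝ) + ε) * n := by
    by_contra hcon
    exact hfree (hcont.trans (hn (not_lt.1 hcon)))
  have : Nonempty (Fin n) := ⟨⟨0, hn1⟩⟩
  obtain ⟨v, hv⟩ := G.exists_minimal_degree_vertex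
  have h1 := card_edgeFinset_deleteIncidenceSet_le_extremalNumber hfree v
  rw [Fintype.card_fin] at h1
  have h2 := G.card_edgeFinset_deleteIncidenceSet v
  have h3 : G.edgeFinset.card ≤ extremalNumber (n - 1) H + G.minDegree := by
    rw [hv]; omega
  have h4 : (G.edgeFinset.card : ℝ) ≤ extremalNumber (n - 1) H + G.minDegree := by
    exact_mod_cast h3
  linarith

theorem extremal_upper {α : Type*} [Fintype α] (H : SimpleGraph α) (r : ℕ) (hr : 1 ≤ r)
    (hcol : H.Colorable (r + 1)) {ε : ℝ} (hε : 0 < ε) :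
    ∀ᶠ n : ℕ in atTop, (extremalNumber n H : ℝ) ≤ (1 - 1 / (r : ℝ) + ε) * n.choose 2 := by
  obtain ⟨N, hN⟩ := eventually_atTop.1 (extremal_step H r hr hcol (half_pos hε))
  have hc0 : 0 ≤ 1 - 1 / (r : ℝ) := by
    have : (1 : ℝ) ≤ r := by exact_mod_cast hr
    rw [sub_nonneg, div_le_one (by linarith)]
    exact this
  set c : ℝ := 1 - 1 / (r : ℝ) + ε / 2 with hc
  have hcpos : 0 < c := by linarith
  set A : ℝ := (extremalNumber N H : ℝ) with hA
  have hA0 : 0 ≤ A := by positivity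
  have bound : ∀ n, N ≤ n → (extremalNumber n H : ℝ) ≤ A + c * (n * (n + 1) / 2) := by
    intro n hn
    induction n, hn using Nat.le_induction with
    | base =>
      have : 0 ≤ c * ((N : ℝ) * (N + 1) / 2) := by positivity
      linarith
    | succ n hn ih =>
      have := hN (n + 1) (by omega)
      rw [Nat.add_sub_cancel] at this
      push_cast at this ⊢
      nlinarith
  obtain ⟨M, hM⟩ := exists_nat_ge (1 + 4 * (A + c) / ε)
  filter_upwards [eventually_ge_atTop N, eventually_ge_atTop M, eventually_ge_atTop 1]
    with n h1 h2 h3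
  have hb := bound n h1
  have h2' : (1 : ℝ) + 4 * (A + c) / ε ≤ n := hM.trans (by exact_mod_cast h2)
  have h3' : (1 : ℝ) ≤ n := by exact_mod_cast h3
  have h4 : 4 * (A + c) ≤ (n - 1) * ε := by
    rw [← div_le_iff₀ hε]; linarith
  rw [Nat.cast_choose_two]
  have e1 : 1 - 1 / (r : ℝ) + ε = c + ε / 2 := by rw [hc]; ring
  rw [e1]
  nlinarith

/-- If `χ(H) = r+1`, `χ(F) = s+1`, `r ≥ 1`, and either `s ≥ r` or `F` is not complete
multipartite, then `ex(n, {H, F-ind}) = (1 - 1/r + o(1)) * C(n,2)`. -/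
theorem inducedTuran_asymptotics_of_not_completeMultipartite
    {α β : Type*} [Fintype α] [Fintype β] (H : SimpleGraph α) (F : SimpleGraph β)
    (r s : ℕ) (hr : 1 ≤ r)
    (hH : H.chromaticNumber = (r + 1 : ℕ)) (hF : F.chromaticNumber = (s + 1 : ℕ))
    (hcase : s ≥ r ∨ ¬ _root_.IsCompleteMultipartite F) :
    Filter.Tendsto (fun n : ℕ => (inducedTuranNumber H F n : ℝ) / (n.choose 2 : ℝ))
      Filter.atTop (nhds (1 - 1 / (r : ℝ))) := by
  classical
  have hcolH : H.Colorable (r + 1) := chromaticNumber_le_iff_colorable.1 hH.le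
  have hnH : ¬ H.Colorable r := by
    intro h
    have := chromaticNumber_le_iff_colorable.2 h
    rw [hH] at this
    have : r + 1 ≤ r := by exact_mod_cast this
    omega
  have hbdd : ∀ n, ∀ m ∈ {m | ∃ G : SimpleGraph (Fin n),
      ¬ ContainsCopy H G ∧ ¬ ContainsInducedCopy F G ∧ m = G.edgeSet.ncard},
      m ≤ extremalNumber n H := by
    rintro n m ⟨G, h1, -, rfl⟩
    have hfree : H.Free G := fun ⟨f⟩ => h1 ⟨f.toHom, f.injective⟩
    have := card_edgeFinset_le_extremalNumber hfree
    rw [Fintype.card_fin] at this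
    rwa [← coe_edgeFinset, Set.ncard_coe_finset]
  have hturcol : ∀ n, (turanGraph n r).Colorable r := fun n =>
    ⟨Coloring.mk (fun v => (⟨v % r, Nat.mod_lt _ hr⟩ : Fin r)) (by
      intro v w h h'
      exact h (by simpa using h'))⟩
  have hupper : ∀ n, inducedTuranNumber H F n ≤ extremalNumber n H := by
    intro n
    unfold inducedTuranNumber
    exact csSup_le' (hbdd n)
  have hlower : ∀ n, (turanGraph n r).edgeFinset.card ≤ inducedTuranNumber H F n := by
    intro n
    refine le_csSup ⟨_, hbdd n⟩ ⟨turanGraph n r, ?_, ?_, ?_⟩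
    · rintro ⟨f, -⟩
      exact hnH ((hturcol n).of_hom f)
    · rintro ⟨f⟩
      rcases hcase with h | h
      · have h1 : F.Colorable r := (hturcol n).of_hom f.toHom
        have := chromaticNumber_le_iff_colorable.2 h1
        rw [hF] at this
        have : s + 1 ≤ r := by exact_mod_cast this
        omega
      · refine h ⟨ℕ, fun a => (f a : ℕ) % r, fun a b => ?_⟩
        rw [← f.map_adj_iff, turanGraph_adj]
    · rw [← coe_edgeFinset, Set.ncard_coe_finset]
  have hr0 : (0 : ℝ) < r := by exact_mod_cast hr
  rw [Metric.tendsto_atTop']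
  intro δ hδ
  obtain ⟨N, hN⟩ := eventually_atTop.1 (extremal_upper H r hr hcolH (half_pos hδ))
  refine ⟨max N 2, fun n hn => ?_⟩
  have hnN : N ≤ n := by omega
  have hn2 : 2 ≤ n := by omega
  have hpos : (0 : ℝ) < n.choose 2 := by exact_mod_cast Nat.choose_pos hn2
  have hu : (inducedTuranNumber H F n : ℝ) / n.choose 2 ≤ 1 - 1 / (r : ℝ) + δ / 2 := by
    rw [div_le_iff₀ hpos]
    exact le_trans (by exact_mod_cast hupper n) (hN n hnN)
  have hl : 1 - 1 / (r : ℝ) ≤ (inducedTuranNumber H F n : ℝ) / n.choose 2 := by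
    rw [le_div_iff₀ hpos]
    have h1 : ((r - 1 : ℕ) : ℝ) * n.choose 2 ≤ r * (inducedTuranNumber H F n : ℝ) := by
      exact_mod_cast (turan_card_lower r hr n).trans (Nat.mul_le_mul_left r (hlower n))
    rw [Nat.cast_sub hr, Nat.cast_one] at h1
    have h2 : (1 - 1 / (r : ℝ)) * n.choose 2 = ((r : ℝ) - 1) * n.choose 2 / r := by
      field_simp
    rw [h2, div_le_iff₀ hr0]
    linarith
  rw [Real.dist_eq, abs_lt]
  constructor <;> linarith
end

section
/- Let H and F be graphs with chromatic numbers r+1 and s+1 respectively, where r > s ≥ 1. If F is a complete (s+1)-partite graph, then the induced Turán number ex(n, {H, F-ind}) equals (1 - 1/s + o(1))·C(n,2) as n → ∞; that is, ex(n, {H, F-ind}) / C(n,2) → 1 - 1/s as n → ∞. -/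
open SimpleGraph Filter

theorem aux_ramsey (a b : ℕ) : ∃ N : ℕ, ∀ {V : Type} (G : SimpleGraph V) (S : Finset V),
    N ≤ S.card → (∃ T ⊆ S, T.card = a ∧ ∀ x ∈ T, ∀ y ∈ T, x ≠ y → G.Adj x y) ∨
      (∃ T ⊆ S, T.card = b ∧ ∀ x ∈ T, ∀ y ∈ T, ¬ G.Adj x y) := by
  classical
  induction a generalizing b with
  | zero => exact ⟨0, fun G S _ => Or.inl ⟨∅, by simp, by simp, by simp⟩⟩
  | succ a iha =>
    induction b with
    | zero => exact ⟨0, fun G S _ => Or.inr ⟨∅, by simp, by simp, by simp⟩⟩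
    | succ b ihb =>
      obtain ⟨N1, h1⟩ := iha (b + 1)
      obtain ⟨N2, h2⟩ := ihb
      refine ⟨N1 + N2 + 1, fun {V} G S hS => ?_⟩
      obtain ⟨v, hv⟩ : S.Nonempty := Finset.card_pos.mp (by omega)
      have hc := Finset.card_filter_add_card_filter_not (s := S.erase v) (fun w => G.Adj v w)
      rw [Finset.card_erase_of_mem hv] at hc
      by_cases hN : N1 ≤ ((S.erase v).filter (fun w => G.Adj v w)).card
      · rcases h1 G _ hN with ⟨T, hT, hTc, hadj⟩ | ⟨T, hT, hTc, hadj⟩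
        · left
          have hTv : ∀ x ∈ T, x ∈ S ∧ x ≠ v ∧ G.Adj v x := by
            intro x hx
            have := hT hx
            simp at this
            tauto
          refine ⟨insert v T, ?_, ?_, ?_⟩
          · intro x hx
            rcases Finset.mem_insert.mp hx with rfl | hx
            · exact hv
            · exact (hTv x hx).1
          · rw [Finset.card_insert_of_notMem (fun h => (hTv v h).2.1 rfl), hTc]
          · intro x hx y hy hxy
            rcases Finset.mem_insert.mp hx with rfl | hx' <;>
              rcases Finset.mem_insert.mp hy with rfl | hy'
            · exact absurd rfl hxy
            · exact (hTv y hy').2.2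
            · exact (hTv x hx').2.2.symm
            · exact hadj x hx' y hy' hxy
        · right
          exact ⟨T, hT.trans ((Finset.filter_subset _ _).trans (Finset.erase_subset _ _)), hTc, hadj⟩
      · have hN' : N2 ≤ ((S.erase v).filter (fun w => ¬ G.Adj v w)).card := by omega
        rcases h2 G _ hN' with ⟨T, hT, hTc, hadj⟩ | ⟨T, hT, hTc, hadj⟩
        · left
          exact ⟨T, hT.trans ((Finset.filter_subset _ _).trans (Finset.erase_subset _ _)), hTc, hadj⟩
        · right
          have hTv : ∀ x ∈ T, x ∈ S ∧ x ≠ v ∧ ¬ G.Adj v x := by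
            intro x hx
            have := hT hx
            simp at this
            tauto
          refine ⟨insert v T, ?_, ?_, ?_⟩
          · intro x hx
            rcases Finset.mem_insert.mp hx with rfl | hx
            · exact hv
            · exact (hTv x hx).1
          · rw [Finset.card_insert_of_notMem (fun h => (hTv v h).2.1 rfl), hTc]
          · intro x hx y hy
            rcases Finset.mem_insert.mp hx with rfl | hx' <;>
              rcases Finset.mem_insert.mp hy with rfl | hy'
            · exact G.irrefl
            · exact (hTv y hy').2.2
            · exact fun h => (hTv x hx').2.2 h.symm
            · exact hadj x hx' y hy'

theorem aux_free {α β : Type*} [Fintype α] [Fintype β] (H : SimpleGraph α) (F : SimpleGraph β)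
    (k : ℕ) (hF : IsCompleteMultipartiteWith F k) :
    ∃ t : ℕ, ∀ (n : ℕ) (G : SimpleGraph (Fin n)), ¬ ContainsCopy H G →
      ¬ ContainsInducedCopy F G → (completeEquipartiteGraph k t).Free G := by
  classical
  obtain ⟨t, ht⟩ := aux_ramsey (Fintype.card α) (Fintype.card β)
  refine ⟨t, fun n G hH hFi ⟨f⟩ => ?_⟩
  obtain ⟨c, -, hc⟩ := hF
  have hfadj : ∀ x y : Fin k × Fin t, x.1 ≠ y.1 → G.Adj (f x) (f y) :=
    fun x y h => f.toHom.map_adj h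
  have key : ∀ i : Fin k, ∃ e : β → Fin t, Function.Injective e ∧
      ∀ x y, ¬ G.Adj (f (i, e x)) (f (i, e y)) := by
    intro i
    rcases ht (G.comap (fun j : Fin t => f (i, j))) Finset.univ (by simp) with
      ⟨T, -, hTc, hadj⟩ | ⟨T, -, hTc, hadj⟩
    · exfalso
      apply hH
      have e : α ≃ T := Fintype.equivOfCardEq (by simp [hTc])
      have inj : Function.Injective (fun x : α => f (i, (e x : Fin t))) := by
        intro x y hxy
        have := f.injective hxy
        simpa [Subtype.ext_iff] using this
      refine ⟨⟨fun x => f (i, (e x : Fin t)), ?_⟩, inj⟩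
      intro x y hxy
      refine hadj _ (e x).2 _ (e y).2 ?_
      intro h
      exact hxy.ne (e.injective (Subtype.ext h))
    · have e : β ≃ T := Fintype.equivOfCardEq (by simp [hTc])
      refine ⟨fun x => (e x : Fin t), fun x y h => e.injective (Subtype.ext h), ?_⟩
      intro x y
      exact hadj _ (e x).2 _ (e y).2
  choose e he hne using key
  apply hFi
  refine ⟨⟨⟨fun b => f (c b, e (c b) b), ?_⟩, ?_⟩⟩
  · intro x y hxy
    have := f.injective hxy
    rw [Prod.mk.injEq] at this
    obtain ⟨h1, h2⟩ := this
    rw [h1] at h2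
    exact he _ h2
  · intro x y
    change G.Adj (f (c x, e (c x) x)) (f (c y, e (c y) y)) ↔ F.Adj x y
    rw [hc]
    constructor
    · intro h hxy
      rw [hxy] at h
      exact hne _ _ _ h
    · intro h
      exact hfadj _ _ h

theorem aux_upper (s t : ℕ) {ε : ℝ} (hε : 0 < ε) :
    ∃ (N : ℕ) (C : ℝ), ∀ n ≥ N, (extremalNumber n (completeEquipartiteGraph (s + 1) t) : ℝ) ≤
      C + (1 - 1 / (s : ℝ) + ε) * (n * (n + 1) / 2) := by
  classical
  obtain ⟨N, hN⟩ := eventually_atTop.mp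
    (eventually_completeEquipartiteGraph_isContained_of_minDegree hε s t)
  set c : ℝ := 1 - 1 / (s : ℝ) + ε with hc
  have hc0 : 0 ≤ c := by
    have : 1 / (s : ℝ) ≤ 1 := by
      rcases Nat.eq_zero_or_pos s with rfl | h
      · simp
      · rw [div_le_one (by exact_mod_cast h)]
        exact_mod_cast h
    linarith
  set x : ℕ → ℝ := fun n => (extremalNumber n (completeEquipartiteGraph (s + 1) t) : ℝ) with hx
  have step : ∀ n ≥ N, x (n + 1) ≤ x n + c * (n + 1) := by
    intro n hn
    have hx0 : 0 ≤ x n := Nat.cast_nonneg _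
    have := (extremalNumber_le_iff_of_nonneg (V := Fin (n + 1))
      (completeEquipartiteGraph (s + 1) t) (m := x n + c * (n + 1)) (by positivity)).mpr
    rw [Fintype.card_fin] at this
    apply this
    intro G _ hG
    have hdeg : (G.minDegree : ℝ) < c * ((n + 1 : ℕ) : ℝ) := by
      by_contra hcon
      push Not at hcon
      exact hG (hN (n + 1) (by omega) hcon)
    obtain ⟨v, hv⟩ := G.exists_minimal_degree_vertex
    have h1 := card_edgeFinset_deleteIncidenceSet_le_extremalNumber hG v
    have h2 := G.card_edgeFinset_deleteIncidenceSet v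
    rw [Fintype.card_fin, Nat.add_sub_cancel] at h1
    have h3 : G.edgeFinset.card ≤ extremalNumber n (completeEquipartiteGraph (s + 1) t)
        + G.minDegree := by
      rw [hv]; omega
    have h4 : (G.edgeFinset.card : ℝ) ≤ x n + G.minDegree := by
      simp only [hx]; exact_mod_cast h3
    push_cast at hdeg
    linarith
  refine ⟨N, x N, fun n hn => ?_⟩
  induction n, hn using Nat.le_induction with
  | base => 
    have : 0 ≤ c * ((N : ℝ) * (N + 1) / 2) := by positivity
    linarith
  | succ n hn ih =>
    have := step n hn
    have ih' : x n ≤ x N + c * (n * (n + 1) / 2) := ih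
    change x (n + 1) ≤ _
    push_cast
    nlinarith

theorem aux_lower (n s : ℕ) (hs : 1 ≤ s) :
    ((n : ℝ) ^ 2 - (s : ℝ) ^ 2) * (s - 1) / (2 * s) - 1 ≤
      ((turanGraph n s).edgeFinset.card : ℝ) := by
  rw [card_edgeFinset_turanGraph]
  have hm : n % s < s := Nat.mod_lt _ hs
  have hmn : n % s ≤ n := Nat.mod_le _ _
  have hsq : (n % s) ^ 2 ≤ n ^ 2 := Nat.pow_le_pow_left hmn 2
  set A := (n ^ 2 - (n % s) ^ 2) * (s - 1) with hA
  have hAr : (A : ℝ) = ((n : ℝ) ^ 2 - ((n % s : ℕ) : ℝ) ^ 2) * (s - 1) := by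
    rw [hA]; push_cast [Nat.cast_sub hsq, Nat.cast_sub hs]; ring
  have h1 : A < A / (2 * s) * (2 * s) + 2 * s := Nat.lt_div_mul_add (by omega)
  have h2 : (A : ℝ) < ((A / (2 * s) : ℕ) : ℝ) * (2 * s) + 2 * s := by exact_mod_cast h1
  have hspos : (0 : ℝ) < s := by exact_mod_cast hs
  have hs1 : (0 : ℝ) ≤ (s : ℝ) - 1 := by
    have : (1 : ℝ) ≤ s := by exact_mod_cast hs
    linarith
  have h3 : ((n % s : ℕ) : ℝ) ^ 2 ≤ (s : ℝ) ^ 2 := by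
    exact_mod_cast Nat.pow_le_pow_left hm.le 2
  have h4 : ((n : ℝ) ^ 2 - (s : ℝ) ^ 2) * (s - 1) ≤ A := by
    rw [hAr]
    apply mul_le_mul_of_nonneg_right _ hs1
    linarith
  have h5 : ((n : ℝ) ^ 2 - (s : ℝ) ^ 2) * (s - 1) / (2 * s) ≤ ((A / (2 * s) : ℕ) : ℝ) + 1 := by
    rw [div_le_iff₀ (by positivity)]
    nlinarith
  rw [Nat.cast_add]
  have h6 : (0 : ℝ) ≤ (((n % s).choose 2 : ℕ) : ℝ) := Nat.cast_nonneg _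
  linarith

theorem aux_turan_colorable (n s : ℕ) (hs : 1 ≤ s) : (turanGraph n s).Colorable s := by
  refine ⟨Coloring.mk (fun v => (⟨v % s, Nat.mod_lt _ hs⟩ : Fin s)) ?_⟩
  intro v w h heq
  exact h (by simpa using heq)

theorem aux_not_colorable {α : Type*} {H : SimpleGraph α} {r s : ℕ} (hsr : s < r + 1)
    (hH : H.chromaticNumber = (r + 1 : ℕ)) : ¬ H.Colorable s := by
  intro h
  have := h.chromaticNumber_le
  rw [hH] at this
  have : r + 1 ≤ s := by exact_mod_cast this
  omega

theorem aux_tendsto (c C d : ℝ) :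
    Tendsto (fun n : ℕ => (C + c * ((n : ℝ) * (n + d) / 2)) / (n.choose 2 : ℝ)) atTop (nhds c) := by
  have h1 : Tendsto (fun n : ℕ => (n : ℝ)⁻¹) atTop (nhds 0) :=
    tendsto_inv_atTop_zero.comp tendsto_natCast_atTop_atTop
  have h2 : Tendsto (fun n : ℕ => (2 * C * ((n : ℝ)⁻¹ * (n : ℝ)⁻¹) + c * (1 + d * (n : ℝ)⁻¹)) /
      (1 - (n : ℝ)⁻¹)) atTop (nhds ((2 * C * (0 * 0) + c * (1 + d * 0)) / (1 - 0))) := by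
    apply Tendsto.div
    · exact ((h1.mul h1).const_mul _).add ((((h1.const_mul d).const_add 1)).const_mul c)
    · exact h1.const_sub 1
    · norm_num
  have h3 : (2 * C * (0 * 0) + c * (1 + d * 0)) / (1 - 0) = c := by ring
  rw [h3] at h2
  refine h2.congr' ?_
  filter_upwards [eventually_ge_atTop 2] with n hn
  have hn' : (2 : ℝ) ≤ n := by exact_mod_cast hn
  rw [Nat.cast_choose_two]
  have : (n : ℝ) - 1 ≠ 0 := by linarith
  have hn0 : (n : ℝ) ≠ 0 := by linarith
  have : 1 - (n : ℝ)⁻¹ ≠ 0 := by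
    intro h
    field_simp at h
    exact this (by simpa using h)
  field_simp

/-- If `χ(H) = r+1`, `χ(F) = s+1`, `r > s ≥ 1`, and `F` is complete `(s+1)`-partite, then
`ex(n, {H, F-ind}) = (1 - 1/s + o(1)) * C(n,2)`. -/
theorem inducedTuran_asymptotics_of_completeMultipartite
    {α β : Type*} [Fintype α] [Fintype β] (H : SimpleGraph α) (F : SimpleGraph β)
    (r s : ℕ) (hs : 1 ≤ s) (hsr : s < r)
    (hH : H.chromaticNumber = (r + 1 : ℕ)) (hF : F.chromaticNumber = (s + 1 : ℕ))
    (hFmp : IsCompleteMultipartiteWith F (s + 1)) :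
    Filter.Tendsto (fun n : ℕ => (inducedTuranNumber H F n : ℝ) / (n.choose 2 : ℝ))
      Filter.atTop (nhds (1 - 1 / (s : ℝ))) := by
  classical
  have hbdd : ∀ n, BddAbove {m | ∃ G : SimpleGraph (Fin n),
      ¬ ContainsCopy H G ∧ ¬ ContainsInducedCopy F G ∧ m = G.edgeSet.ncard} := by
    intro n
    apply Set.Finite.bddAbove
    apply (Set.finite_range (fun G : SimpleGraph (Fin n) => G.edgeSet.ncard)).subset
    rintro m ⟨G, -, -, rfl⟩
    exact ⟨G, rfl⟩
  have hmem : ∀ n, (turanGraph n s).edgeFinset.card ∈ {m | ∃ G : SimpleGraph (Fin n),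
      ¬ ContainsCopy H G ∧ ¬ ContainsInducedCopy F G ∧ m = G.edgeSet.ncard} := by
    intro n
    refine ⟨turanGraph n s, ?_, ?_, ?_⟩
    · rintro ⟨f, -⟩
      exact aux_not_colorable (by omega) hH ((aux_turan_colorable n s hs).of_hom f)
    · rintro ⟨f⟩
      exact aux_not_colorable (by omega) hF ((aux_turan_colorable n s hs).of_hom f.toHom)
    · rw [← coe_edgeFinset, Set.ncard_coe_finset]
  have hlow : ∀ n, ((turanGraph n s).edgeFinset.card : ℝ) ≤ inducedTuranNumber H F n := by
    intro n
    exact_mod_cast le_csSup (hbdd n) (hmem n)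
  obtain ⟨t, ht⟩ := aux_free H F (s + 1) hFmp
  have hup : ∀ n, (inducedTuranNumber H F n : ℝ) ≤
      extremalNumber n (completeEquipartiteGraph (s + 1) t) := by
    intro n
    have : inducedTuranNumber H F n ≤ extremalNumber n (completeEquipartiteGraph (s + 1) t) := by
      apply csSup_le ⟨_, hmem n⟩
      rintro m ⟨G, h1, h2, rfl⟩
      have := card_edgeFinset_le_extremalNumber (ht n G h1 h2)
      rw [Fintype.card_fin] at this
      rwa [← coe_edgeFinset, Set.ncard_coe_finset]
    exact_mod_cast this
  have hspos : (0 : ℝ) < s := by exact_mod_cast hs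
  rw [tendsto_order]
  constructor
  · intro a ha
    have hT := aux_tendsto (1 - 1 / (s : ℝ)) (-(s : ℝ) ^ 2 * (s - 1) / (2 * s) - 1) 0
    filter_upwards [hT.eventually_const_lt ha] with n hn
    refine hn.trans_le (div_le_div_of_nonneg_right ?_ (Nat.cast_nonneg _))
    refine le_trans (le_of_eq ?_) ((aux_lower n s hs).trans (hlow n))
    field_simp
    ring
  · intro a ha
    obtain ⟨b, hb1, hb2⟩ := exists_between ha
    obtain ⟨N, C, hNC⟩ := aux_upper s t (ε := b - (1 - 1 / (s : ℝ))) (by linarith)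
    have hT := aux_tendsto b C 1
    filter_upwards [hT.eventually_lt_const hb2, eventually_ge_atTop N] with n hn hnN
    refine lt_of_le_of_lt (div_le_div_of_nonneg_right ?_ (Nat.cast_nonneg _)) hn
    have := hNC n hnN
    rw [add_sub_cancel] at this
    exact (hup n).trans this
end

section
/- Let H be a graph and let m, t, s be positive integers such that every graph on m vertices contains either an independent set of size t or a copy of H as a subgraph. If a graph G contains the complete (s+1)-partite graph K_{s+1}(m) (with all parts of size m) as a subgraph and G contains no copy of H, then G contains an induced copy of K_{s+1}(t), the complete (s+1)-partite graph with all parts of size t. -/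
open SimpleGraph Filter

/-- If every graph on `m` vertices contains an independent set of size `t` or a copy of `H`,
and `G` contains `K_{s+1}(m)` as a subgraph but no copy of `H`, then `G` contains an induced
copy of `K_{s+1}(t)`. -/
theorem inducedCopy_of_containsCopy_completeMultipartite
    {α γ : Type*} (H : SimpleGraph α) (G : SimpleGraph γ) (m t s : ℕ)
    (hm : 0 < m) (ht : 0 < t) (hs : 0 < s)
    (hRamsey : ∀ G' : SimpleGraph (Fin m),
      (∃ I : Finset (Fin m), I.card = t ∧ ∀ a ∈ I, ∀ b ∈ I, ¬ G'.Adj a b) ∨ ContainsCopy H G')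
    (hKm : ContainsCopy (completeMultipartiteGraph (fun _ : Fin (s + 1) => Fin m)) G)
    (hH : ¬ ContainsCopy H G) :
    ContainsInducedCopy (completeMultipartiteGraph (fun _ : Fin (s + 1) => Fin t)) G := by
  classical
  obtain ⟨f, hf⟩ := hKm
  have key : ∀ i : Fin (s + 1), ∃ I : Finset (Fin m), I.card = t ∧
      ∀ a ∈ I, ∀ b ∈ I, ¬ G.Adj (f ⟨i, a⟩) (f ⟨i, b⟩) := by
    intro i
    rcases hRamsey (G.comap (fun a : Fin m => f ⟨i, a⟩)) with h | ⟨g, hg⟩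
    · exact h
    · exfalso
      refine hH ⟨⟨fun a => f ⟨i, g a⟩, fun {a b} hab => g.map_rel hab⟩, ?_⟩
      intro a b hab
      have h1 := hf hab
      apply hg
      simpa using h1
  choose I hI hind using key
  let e : ∀ i, Fin t ↪ Fin m := fun i => ((I i).orderEmbOfFin (hI i)).toEmbedding
  have he : ∀ i a, e i a ∈ I i := fun i a => (I i).orderEmbOfFin_mem (hI i) a
  refine ⟨⟨⟨fun x => f ⟨x.1, e x.1 x.2⟩, ?_⟩, ?_⟩⟩
  · rintro ⟨i, a⟩ ⟨j, b⟩ hab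
    have h1 := hf hab
    obtain ⟨rfl, h2⟩ := Sigma.mk.inj_iff.mp h1
    have h3 := (e i).injective (eq_of_heq h2)
    simp only at h3
    rw [h3]
  · rintro ⟨i, a⟩ ⟨j, b⟩
    constructor
    · intro h hij
      change i = j at hij
      subst hij
      exact hind i _ (he i a) _ (he i b) h
    · intro h
      exact f.map_rel (a := ⟨i, e i a⟩) (b := ⟨j, e j b⟩) h
end
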